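/- arXiv:1104.4820 — 3 statements merged into one kernel-verified Lean document; each statement's English description precedes it below -/
import Mathlib

section
/- For every A ∈ 𝒯, the Cesàro means of its Fourier series converge to A in operator norm: σ_N := Σ_{k=−N}^{N} (1 − |k|/(N+1)) A_k satisfies ‖σ_N − A‖ → 0 as N → ∞. -/
/-- `T_{n,m} = Tⁿ (T*)ᵐ` for a bounded operator `T` on a complex Hilbert space. -/
noncomputable def Tnm {H : Type*} [NormedAddCommGroup H] [InnerProductSpace ℂ H]
    [CompleteSpace H] (T : H →L[ℂ] H) (n m : ℕ) : H →L[ℂ] H :=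
  T ^ n * (ContinuousLinearMap.adjoint T) ^ m

/-- The Toeplitz algebra: the norm-closed star-subalgebra of `B(H)` generated by `T`. -/
noncomputable def ToeplitzAlg {H : Type*} [NormedAddCommGroup H] [InnerProductSpace ℂ H]
    [CompleteSpace H] (T : H →L[ℂ] H) : StarSubalgebra ℂ (H →L[ℂ] H) :=
  StarAlgebra.elemental ℂ T

/-- The `k`-th Fourier coefficient `A_k = (1/2π) ∫₀^{2π} e^{-ikθ} U_θ A U_θ* dθ`
(a Bochner integral in `B(H)`). -/
noncomputable def opFourierCoeff {H : Type*} [NormedAddCommGroup H] [InnerProductSpace ℂ H]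
    [CompleteSpace H] (U : ℝ → H →L[ℂ] H) (A : H →L[ℂ] H) (k : ℤ) : H →L[ℂ] H :=
  (2 * Real.pi)⁻¹ • ∫ θ in (0 : ℝ)..(2 * Real.pi),
    Complex.exp (-(k : ℂ) * θ * Complex.I) • (U θ * A * ContinuousLinearMap.adjoint (U θ))

open Finset Filter Topology MeasureTheory

section FejerKernel

theorem pow_succ_mul_sum_inv_pow {z : ℂ} (hz : z ≠ 0) (N : ℕ) :
    z ^ (N + 1) * ∑ j ∈ range (N + 1), z⁻¹ ^ j = ∑ j ∈ range (N + 1), z ^ (j + 1) := by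
  rw [← sum_range_reflect, mul_sum]
  refine sum_congr rfl fun j hj => ?_
  have hj' : j ≤ N := Nat.lt_succ_iff.mp (mem_range.mp hj)
  obtain ⟨m, rfl⟩ := Nat.exists_eq_add_of_le hj'
  have h : j + m + 1 - 1 - j = m := by omega
  rw [h, inv_pow, show j + m + 1 = (j + 1) + m by ring, pow_add,
    mul_inv_cancel_right₀ (pow_ne_zero m hz)]

theorem sum_Icc_zpow (z : ℂ) (N : ℕ) :
    ∑ k ∈ Icc (-(N : ℤ)) N, z ^ k =
      1 + ∑ j ∈ range N, z ^ (j + 1) + ∑ j ∈ range N, z⁻¹ ^ (j + 1) := by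
  induction N with
  | zero => simp
  | succ N ih =>
    have h := sum_Icc_succ_eq_add_endpoints (fun k : ℤ => z ^ k) (N := N)
    push_cast at h ⊢
    rw [h, ih, sum_range_succ, sum_range_succ _ N, ← zpow_natCast, ← zpow_natCast z⁻¹ (N + 1),
      inv_zpow']
    push_cast
    ring

/-- The Fejér sum factors as the product of two geometric sums. -/
theorem sum_Icc_mul_zpow {z : ℂ} (hz : z ≠ 0) (N : ℕ) :
    ∑ k ∈ Icc (-(N : ℤ)) N, ((N : ℂ) + 1 - (|k| : ℤ)) * z ^ k =
      (∑ j ∈ range (N + 1), z ^ j) * ∑ j ∈ range (N + 1), z⁻¹ ^ j := by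
  induction N with
  | zero => simp
  | succ N ih =>
    have h := sum_Icc_succ_eq_add_endpoints
      (fun k : ℤ => ((N : ℂ) + 1 + 1 - (|k| : ℤ)) * z ^ k) (N := N)
    have hD := sum_Icc_zpow z (N + 1)
    rw [Nat.cast_succ, sum_Icc_succ_eq_add_endpoints] at hD
    have h1 := pow_succ_mul_sum_inv_pow hz N
    have h2 := pow_succ_mul_sum_inv_pow (inv_ne_zero hz) N
    rw [inv_inv] at h2
    have hsplit : ∑ k ∈ Icc (-(N : ℤ)) N, ((N : ℂ) + 1 + 1 - (|k| : ℤ)) * z ^ k =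
        ∑ k ∈ Icc (-(N : ℤ)) N, ((N : ℂ) + 1 - (|k| : ℤ)) * z ^ k +
          ∑ k ∈ Icc (-(N : ℤ)) N, z ^ k := by
      rw [← sum_add_distrib]
      exact sum_congr rfl fun k _ => by ring
    have hc : |(N : ℤ) + 1| = N + 1 := abs_of_nonneg (by positivity)
    have hc' : |-((N : ℤ) + 1)| = N + 1 := by rw [abs_neg, hc]
    have h3 : z ^ (N + 1) * z⁻¹ ^ (N + 1) = 1 := by
      rw [← mul_pow, mul_inv_cancel₀ hz, one_pow]
    push_cast at h hD ⊢
    rw [h, hsplit, ih, sum_range_succ _ (N + 1), sum_range_succ _ (N + 1), hc, hc']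
    push_cast
    linear_combination hD - h1 - h2 - h3

/-- The Fejér kernel. -/
noncomputable def fejerKernel (N : ℕ) (θ : ℝ) : ℝ :=
  ((N : ℝ) + 1)⁻¹ * ‖∑ j ∈ range (N + 1), Complex.exp (-(θ * Complex.I)) ^ j‖ ^ 2

theorem fejerKernel_nonneg (N : ℕ) (θ : ℝ) : 0 ≤ fejerKernel N θ := by
  unfold fejerKernel; positivity

theorem continuous_fejerKernel (N : ℕ) : Continuous (fejerKernel N) := by
  unfold fejerKernel; fun_prop

theorem fejerKernel_eq_sum (N : ℕ) (θ : ℝ) :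
    (fejerKernel N θ : ℂ) = ∑ k ∈ Icc (-(N : ℤ)) N,
      (((1 : ℝ) - |(k : ℝ)| / ((N : ℝ) + 1) : ℝ) : ℂ) * Complex.exp (-(k : ℂ) * θ * Complex.I) := by
  have hN : ((N : ℂ) + 1) ≠ 0 := by exact_mod_cast N.succ_ne_zero
  have hconj : (starRingEnd ℂ) (Complex.exp (-(θ * Complex.I))) =
      (Complex.exp (-(θ * Complex.I)))⁻¹ := by
    rw [← Complex.exp_conj, ← Complex.exp_neg]
    simp
  unfold fejerKernel
  push_cast
  rw [← Complex.mul_conj', map_sum]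
  simp_rw [map_pow, hconj]
  rw [← sum_Icc_mul_zpow (Complex.exp_ne_zero _), mul_sum]
  refine sum_congr rfl fun k _ => ?_
  rw [← Complex.exp_int_mul]
  have : (k : ℂ) * -(θ * Complex.I) = -(k : ℂ) * θ * Complex.I := by ring
  rw [this, ← mul_assoc]
  congr 1
  push_cast [← Int.cast_abs]
  field_simp

theorem integral_exp_int_mul (k : ℤ) :
    ∫ θ in (0 : ℝ)..(2 * Real.pi), Complex.exp ((k : ℂ) * θ * Complex.I) =
      if k = 0 then ((2 * Real.pi : ℝ) : ℂ) else 0 := by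
  split_ifs with hk
  · simp [hk]
  · have hc : (k : ℂ) * Complex.I ≠ 0 := by simp [hk]
    simp_rw [mul_right_comm (k : ℂ) _ Complex.I]
    rw [integral_exp_mul_complex hc]
    have : (k : ℂ) * Complex.I * ((2 * Real.pi : ℝ) : ℂ) = k * (2 * Real.pi * Complex.I) := by
      push_cast; ring
    rw [this, Complex.exp_int_mul_two_pi_mul_I]
    simp

theorem integral_fejerKernel (N : ℕ) :
    ∫ θ in (0 : ℝ)..(2 * Real.pi), fejerKernel N θ = 2 * Real.pi := by
  have h : ((∫ θ in (0 : ℝ)..(2 * Real.pi), fejerKernel N θ : ℝ) : ℂ) =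
      ((2 * Real.pi : ℝ) : ℂ) := by
    rw [← intervalIntegral.integral_ofReal]
    simp_rw [fejerKernel_eq_sum]
    rw [intervalIntegral.integral_finsetSum
      fun k _ => (by fun_prop : Continuous _).intervalIntegrable _ _]
    simp_rw [intervalIntegral.integral_const_mul, ← Int.cast_neg, integral_exp_int_mul, neg_eq_zero]
    simp
  exact_mod_cast h

end FejerKernel

section CesaroMean

variable {E : Type*} [NormedAddCommGroup E] [NormedSpace ℂ E]

/-- The Cesàro mean of order `N` of the Fourier series of `f` on `[0, 2π]`. -/
noncomputable def cesaroMean (f : ℝ → E) (N : ℕ) : E :=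
  ∑ k ∈ Icc (-(N : ℤ)) (N : ℤ), ((1 : ℝ) - |(k : ℝ)| / ((N : ℝ) + 1)) •
    ((2 * Real.pi)⁻¹ • ∫ θ in (0 : ℝ)..(2 * Real.pi), Complex.exp (-(k : ℂ) * θ * Complex.I) • f θ)

theorem cesaroMean_eq_integral {f : ℝ → E} (hf : Continuous f) (N : ℕ) :
    cesaroMean f N =
      (2 * Real.pi)⁻¹ • ∫ θ in (0 : ℝ)..(2 * Real.pi), fejerKernel N θ • f θ := by
  have h : ∀ θ : ℝ, fejerKernel N θ • f θ = ∑ k ∈ Icc (-(N : ℤ)) (N : ℤ),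
      ((1 : ℝ) - |(k : ℝ)| / ((N : ℝ) + 1)) • Complex.exp (-(k : ℂ) * θ * Complex.I) • f θ := by
    intro θ
    rw [← Complex.coe_smul, fejerKernel_eq_sum, sum_smul]
    exact sum_congr rfl fun k _ => by rw [mul_smul, Complex.coe_smul]
  simp_rw [h]
  rw [intervalIntegral.integral_finsetSum
    fun k _ => (by fun_prop : Continuous _).intervalIntegrable _ _, smul_sum]
  exact sum_congr rfl fun k _ => by rw [intervalIntegral.integral_smul, smul_comm]

theorem norm_cesaroMean_le {f : ℝ → E} (hf : Continuous f) {C : ℝ} (hC : ∀ θ, ‖f θ‖ ≤ C) (N : ℕ) :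
    ‖cesaroMean f N‖ ≤ C := by
  have hpi : 0 < 2 * Real.pi := Real.two_pi_pos
  have hK := continuous_fejerKernel N
  rw [cesaroMean_eq_integral hf, norm_smul, Real.norm_of_nonneg (inv_nonneg.mpr hpi.le),
    inv_mul_le_iff₀ hpi]
  calc ‖∫ θ in (0 : ℝ)..(2 * Real.pi), fejerKernel N θ • f θ‖
      ≤ ∫ θ in (0 : ℝ)..(2 * Real.pi), fejerKernel N θ * C := by
        refine intervalIntegral.norm_integral_le_of_norm_le hpi.le (ae_of_all _ fun θ _ => ?_)
          ((hK.mul continuous_const).intervalIntegrable _ _)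
        rw [norm_smul, Real.norm_of_nonneg (fejerKernel_nonneg N θ)]
        exact mul_le_mul_of_nonneg_left (hC θ) (fejerKernel_nonneg N θ)
    _ = 2 * Real.pi * C := by
        rw [intervalIntegral.integral_mul_const, integral_fejerKernel]

theorem cesaroMean_add {f g : ℝ → E} (hf : Continuous f) (hg : Continuous g) (N : ℕ) :
    cesaroMean (f + g) N = cesaroMean f N + cesaroMean g N := by
  have hK := continuous_fejerKernel N
  rw [cesaroMean_eq_integral hf, cesaroMean_eq_integral hg, cesaroMean_eq_integral (hf.add hg),
    ← smul_add]
  congr 1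
  simp_rw [Pi.add_apply, smul_add]
  exact intervalIntegral.integral_add ((hK.smul hf).intervalIntegrable _ _)
    ((hK.smul hg).intervalIntegrable _ _)

theorem cesaroMean_smul (c : ℂ) (f : ℝ → E) (N : ℕ) :
    cesaroMean (c • f) N = c • cesaroMean f N := by
  simp only [cesaroMean, smul_sum, Pi.smul_apply]
  refine sum_congr rfl fun k _ => ?_
  simp_rw [smul_comm _ c]
  rw [intervalIntegral.integral_smul, smul_comm _ c, smul_comm _ c]

theorem cesaroMean_exp_smul [CompleteSpace E] (k : ℤ) (x : E) {N : ℕ} (hN : |k| ≤ N) :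
    cesaroMean (fun θ : ℝ => Complex.exp ((k : ℂ) * θ * Complex.I) • x) N =
      ((1 : ℝ) - |(k : ℝ)| / ((N : ℝ) + 1)) • x := by
  have hint : ∀ j : ℤ, (∫ θ in (0 : ℝ)..(2 * Real.pi), Complex.exp (-(j : ℂ) * θ * Complex.I) •
      Complex.exp ((k : ℂ) * θ * Complex.I) • x) = if j = k then (2 * Real.pi) • x else 0 := by
    intro j
    have h : ∀ θ : ℝ, Complex.exp (-(j : ℂ) * θ * Complex.I) •
        Complex.exp ((k : ℂ) * θ * Complex.I) • x =
          Complex.exp (((k - j : ℤ) : ℂ) * θ * Complex.I) • x := by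
      intro θ
      rw [smul_smul, ← Complex.exp_add]
      congr 2
      push_cast
      ring
    simp_rw [h]
    rw [intervalIntegral.integral_smul_const, integral_exp_int_mul]
    simp_rw [sub_eq_zero, eq_comm (a := k)]
    split_ifs
    · rw [Complex.coe_smul]
    · rw [zero_smul]
  simp only [cesaroMean, hint]
  rw [sum_eq_single k]
  · rw [if_pos rfl, smul_smul (2 * Real.pi)⁻¹, inv_mul_cancel₀ Real.two_pi_pos.ne', one_smul]
  · intro j _ hj
    simp [hj]
  · intro hk
    exact absurd (mem_Icc.mpr (abs_le.mp hN)) hk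

theorem tendsto_cesaroMean_exp_smul [CompleteSpace E] (k : ℤ) (x : E) :
    Tendsto (cesaroMean fun θ : ℝ => Complex.exp ((k : ℂ) * θ * Complex.I) • x) atTop (𝓝 x) := by
  have h : Tendsto (fun N : ℕ => ((1 : ℝ) - |(k : ℝ)| / ((N : ℝ) + 1)) • x) atTop (𝓝 x) := by
    have h0 : Tendsto (fun N : ℕ => |(k : ℝ)| / ((N : ℝ) + 1)) atTop (𝓝 0) :=
      tendsto_const_nhds.div_atTop
        (tendsto_atTop_add_const_right _ _ tendsto_natCast_atTop_atTop)
    simpa using ((tendsto_const_nhds (x := (1 : ℝ))).sub h0).smul_const x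
  refine h.congr' ?_
  filter_upwards [eventually_ge_atTop k.natAbs] with N hN
  exact (cesaroMean_exp_smul k x (by rw [Int.abs_eq_natAbs]; exact_mod_cast hN)).symm

end CesaroMean

section Rotation

theorem HilbertBasis.continuousLinearMap_ext {ι H : Type*} [NormedAddCommGroup H]
    [InnerProductSpace ℂ H] (e : HilbertBasis ι ℂ H)
    {A B : H →L[ℂ] H} (h : ∀ i, A (e i) = B (e i)) : A = B :=
  ContinuousLinearMap.ext_on
    (Submodule.dense_iff_topologicalClosure_eq_top.mpr e.dense_span)
    (by rintro _ ⟨i, rfl⟩; exact h i)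

variable {H : Type*} [NormedAddCommGroup H] [InnerProductSpace ℂ H] [CompleteSpace H]

open ContinuousLinearMap (adjoint)

theorem adjoint_apply_basis_of_diagonal {ι : Type*} (e : HilbertBasis ι ℂ H) {D : H →L[ℂ] H}
    {c : ι → ℂ} (hD : ∀ i, D (e i) = c i • e i) (i : ι) :
    adjoint D (e i) = (starRingEnd ℂ) (c i) • e i := by
  classical
  apply e.repr.injective
  ext j
  rw [HilbertBasis.repr_apply_apply, HilbertBasis.repr_apply_apply,
    ContinuousLinearMap.adjoint_inner_right, hD, inner_smul_left, inner_smul_right,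
    orthonormal_iff_ite.mp e.orthonormal]
  split_ifs with h
  · rw [h]
  · simp

theorem mem_unitary_of_diagonal {ι : Type*} (e : HilbertBasis ι ℂ H) {D : H →L[ℂ] H}
    {c : ι → ℂ} (hD : ∀ i, D (e i) = c i • e i) (hc : ∀ i, ‖c i‖ = 1) :
    D ∈ unitary (H →L[ℂ] H) := by
  have hcc : ∀ i, c i * (starRingEnd ℂ) (c i) = 1 := fun i => by
    rw [Complex.mul_conj', hc]; simp
  rw [Unitary.mem_iff, ContinuousLinearMap.star_eq_adjoint]
  constructor <;> refine e.continuousLinearMap_ext fun i => ?_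
  · simp [hD, adjoint_apply_basis_of_diagonal e hD, smul_smul, hcc]
  · simp [hD, adjoint_apply_basis_of_diagonal e hD, smul_smul, mul_comm _ (c i), hcc]

/-- `A` is homogeneous of degree `k` for the action `A ↦ U_θ A U_θ*`. -/
def IsHomogeneousOp (U : ℝ → H →L[ℂ] H) (k : ℤ) (A : H →L[ℂ] H) : Prop :=
  ∀ θ : ℝ, U θ * A * adjoint (U θ) = Complex.exp ((k : ℂ) * θ * Complex.I) • A

variable {U : ℝ → H →L[ℂ] H} {A B : H →L[ℂ] H} {k l : ℤ}

theorem IsHomogeneousOp.one (hU : ∀ θ, U θ ∈ unitary (H →L[ℂ] H)) : IsHomogeneousOp U 0 1 := by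
  intro θ
  rw [mul_one, ← ContinuousLinearMap.star_eq_adjoint, Unitary.mul_star_self_of_mem (hU θ)]
  simp

theorem IsHomogeneousOp.mul (hU : ∀ θ, U θ ∈ unitary (H →L[ℂ] H)) (hA : IsHomogeneousOp U k A)
    (hB : IsHomogeneousOp U l B) : IsHomogeneousOp U (k + l) (A * B) := by
  intro θ
  have h : adjoint (U θ) * U θ = 1 := Unitary.star_mul_self_of_mem (hU θ)
  calc U θ * (A * B) * adjoint (U θ)
      = U θ * A * (adjoint (U θ) * U θ) * B * adjoint (U θ) := by rw [h]; simp only [mul_assoc, one_mul]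
    _ = (U θ * A * adjoint (U θ)) * (U θ * B * adjoint (U θ)) := by simp only [mul_assoc]
    _ = Complex.exp (((k + l : ℤ) : ℂ) * θ * Complex.I) • (A * B) := by
        rw [hA θ, hB θ, smul_mul_smul_comm, ← Complex.exp_add]
        congr 2
        push_cast
        ring

theorem IsHomogeneousOp.star (hA : IsHomogeneousOp U k A) : IsHomogeneousOp U (-k) (star A) := by
  intro θ
  have h := congrArg Star.star (hA θ)
  rw [← ContinuousLinearMap.star_eq_adjoint] at h ⊢
  rw [star_mul, star_mul, star_star, star_smul, ← mul_assoc, Complex.star_def,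
    ← Complex.exp_conj] at h
  rw [h]
  congr 2
  simp

theorem norm_conj_le (hU : ∀ θ, U θ ∈ unitary (H →L[ℂ] H)) (A : H →L[ℂ] H) (θ : ℝ) :
    ‖U θ * A * adjoint (U θ)‖ ≤ ‖A‖ := by
  rw [← ContinuousLinearMap.star_eq_adjoint,
    CStarRing.norm_mul_mem_unitary _ (Unitary.star_mem (hU θ)),
    CStarRing.norm_mem_unitary_mul _ (hU θ)]

/-- `A` has norm-continuous orbit and its Fourier series is Cesàro summable to `A`. -/
def IsCesaroSummable (U : ℝ → H →L[ℂ] H) (A : H →L[ℂ] H) : Prop :=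
  (Continuous fun θ => U θ * A * adjoint (U θ)) ∧
    Tendsto (cesaroMean fun θ => U θ * A * adjoint (U θ)) atTop (𝓝 A)

theorem IsHomogeneousOp.isCesaroSummable (hA : IsHomogeneousOp U k A) : IsCesaroSummable U A := by
  unfold IsCesaroSummable
  rw [funext hA]
  exact ⟨by fun_prop, tendsto_cesaroMean_exp_smul k A⟩

theorem IsCesaroSummable.add (hA : IsCesaroSummable U A) (hB : IsCesaroSummable U B) :
    IsCesaroSummable U (A + B) := by
  have h : (fun θ => U θ * (A + B) * adjoint (U θ)) =
      (fun θ => U θ * A * adjoint (U θ)) + fun θ => U θ * B * adjoint (U θ) := by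
    funext θ
    simp only [Pi.add_apply, mul_add, add_mul]
  unfold IsCesaroSummable
  rw [h]
  exact ⟨hA.1.add hB.1, (hA.2.add hB.2).congr fun N => (cesaroMean_add hA.1 hB.1 N).symm⟩

theorem IsCesaroSummable.smul (c : ℂ) (hA : IsCesaroSummable U A) :
    IsCesaroSummable U (c • A) := by
  have h : (fun θ => U θ * (c • A) * adjoint (U θ)) = c • fun θ => U θ * A * adjoint (U θ) := by
    funext θ
    simp only [Pi.smul_apply, mul_smul_comm, smul_mul_assoc]
  unfold IsCesaroSummable
  rw [h]
  exact ⟨hA.1.const_smul c, (hA.2.const_smul c).congr fun N => (cesaroMean_smul c _ N).symm⟩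

theorem isCesaroSummable_of_mem_closure (hU : ∀ θ, U θ ∈ unitary (H →L[ℂ] H))
    (hA : A ∈ closure {B | IsCesaroSummable U B}) : IsCesaroSummable U A := by
  have hsub : ∀ B θ, U θ * A * adjoint (U θ) - U θ * B * adjoint (U θ) = U θ * (A - B) * adjoint (U θ) :=
    fun B θ => by rw [mul_sub, sub_mul]
  have hcont : Continuous fun θ => U θ * A * adjoint (U θ) := by
    refine continuous_of_uniform_approx_of_continuous fun u hu => ?_
    obtain ⟨ε, hε, hεu⟩ := Metric.mem_uniformity_dist.mp hu
    obtain ⟨B, hB, hAB⟩ := Metric.mem_closure_iff.mp hA ε hε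
    refine ⟨_, hB.1, fun θ => hεu ?_⟩
    rw [dist_eq_norm, hsub]
    exact (norm_conj_le hU _ θ).trans_lt (by rwa [← dist_eq_norm])
  refine ⟨hcont, Metric.tendsto_atTop.mpr fun ε hε => ?_⟩
  obtain ⟨B, hB, hAB⟩ := Metric.mem_closure_iff.mp hA (ε / 3) (by positivity)
  obtain ⟨N₀, hN₀⟩ := Metric.tendsto_atTop.mp hB.2 (ε / 3) (by positivity)
  refine ⟨N₀, fun N hN => ?_⟩
  have hdecomp : (fun θ => U θ * A * adjoint (U θ)) =
      (fun θ => U θ * (A - B) * adjoint (U θ)) + fun θ => U θ * B * adjoint (U θ) := by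
    funext θ
    rw [Pi.add_apply, ← hsub, sub_add_cancel]
  have hcont' : Continuous fun θ => U θ * (A - B) * adjoint (U θ) := by
    simp_rw [← hsub]
    exact hcont.sub hB.1
  have h1 := norm_cesaroMean_le hcont' (norm_conj_le hU (A - B)) N
  have h2 := hN₀ N hN
  rw [dist_eq_norm] at hAB h2 ⊢
  rw [hdecomp, cesaroMean_add hcont' hB.1]
  calc ‖cesaroMean (fun θ => U θ * (A - B) * adjoint (U θ)) N +
        cesaroMean (fun θ => U θ * B * adjoint (U θ)) N - A‖
      = ‖cesaroMean (fun θ => U θ * (A - B) * adjoint (U θ)) N +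
        (cesaroMean (fun θ => U θ * B * adjoint (U θ)) N - B) - (A - B)‖ := by congr 1; abel
    _ ≤ ‖cesaroMean (fun θ => U θ * (A - B) * adjoint (U θ)) N‖ +
        ‖cesaroMean (fun θ => U θ * B * adjoint (U θ)) N - B‖ + ‖A - B‖ :=
        (norm_sub_le _ _).trans (by gcongr; exact norm_add_le _ _)
    _ < ε := by linarith

theorem isCesaroSummable_of_mem_elemental {T : H →L[ℂ] H}
    (hU : ∀ θ, U θ ∈ unitary (H →L[ℂ] H)) (hT : IsHomogeneousOp U k T)
    (hA : A ∈ StarAlgebra.elemental ℂ T) : IsCesaroSummable U A := by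
  have hmono : ∀ B ∈ Submonoid.closure ({T} ∪ star {T} : Set (H →L[ℂ] H)),
      ∃ l, IsHomogeneousOp U l B := by
    intro B hB
    induction hB using Submonoid.closure_induction with
    | mem B hB =>
      rcases hB with rfl | hB
      · exact ⟨k, hT⟩
      · rw [Set.star_singleton, Set.mem_singleton_iff] at hB
        exact ⟨-k, hB ▸ hT.star⟩
    | one => exact ⟨0, .one hU⟩
    | mul B C _ _ hB hC =>
      obtain ⟨l, hl⟩ := hB
      obtain ⟨m, hm⟩ := hC
      exact ⟨l + m, hl.mul hU hm⟩
  refine isCesaroSummable_of_mem_closure hU (closure_mono (fun B hB => ?_) hA)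
  have hB' : B ∈ Submodule.span ℂ
      (Submonoid.closure ({T} ∪ star {T} : Set (H →L[ℂ] H)) : Set (H →L[ℂ] H)) := by
    rw [← StarAlgebra.adjoin_eq_span]
    exact hB
  clear hB
  change IsCesaroSummable U B
  induction hB' using Submodule.span_induction with
  | mem B hB => exact (hmono B hB).choose_spec.isCesaroSummable
  | zero => simpa using (IsHomogeneousOp.one hU).isCesaroSummable.smul 0
  | add B C _ _ hB hC => exact hB.add hC
  | smul c B _ hB => exact hB.smul c

theorem isHomogeneousOp_shift (e : HilbertBasis ℕ ℂ H) {T : H →L[ℂ] H}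
    (hT : ∀ n : ℕ, T (e n) = e (n + 1))
    (hU : ∀ (θ : ℝ) (n : ℕ), U θ (e n) = Complex.exp ((n : ℂ) * θ * Complex.I) • e n) :
    IsHomogeneousOp U 1 T := by
  intro θ
  refine e.continuousLinearMap_ext fun n => ?_
  simp only [mul_apply_eq_comp, adjoint_apply_basis_of_diagonal e (hU θ), map_smul, hT,
    hU, _root_.smul_apply, smul_smul, ← Complex.exp_conj, ← Complex.exp_add]
  congr 2
  simp
  ring

end Rotation

/-- the Cesàro (Fejér) means of the Fourier series of `A ∈ 𝒯` converge to `A`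
in operator norm. -/
theorem cesaro_means_tendsto {H : Type*} [NormedAddCommGroup H]
    [InnerProductSpace ℂ H] [CompleteSpace H] (e : HilbertBasis ℕ ℂ H) (T : H →L[ℂ] H)
    (hT : ∀ n : ℕ, T (e n) = e (n + 1))
    (U : ℝ → H →L[ℂ] H)
    (hU : ∀ (θ : ℝ) (n : ℕ), U θ (e n) = Complex.exp ((n : ℂ) * θ * Complex.I) • e n)
    (A : H →L[ℂ] H) (hA : A ∈ ToeplitzAlg T) :
    Filter.Tendsto
      (fun N : ℕ =>
        ‖(∑ k ∈ Finset.Icc (-(N : ℤ)) (N : ℤ),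
            ((1 : ℝ) - |(k : ℝ)| / ((N : ℝ) + 1)) • opFourierCoeff U A k) - A‖)
      Filter.atTop (nhds 0) := by
  have hunit : ∀ θ, U θ ∈ unitary (H →L[ℂ] H) := fun θ =>
    mem_unitary_of_diagonal e (hU θ) fun n => by
      exact_mod_cast Complex.norm_exp_ofReal_mul_I ((n : ℝ) * θ)
  have h := (isCesaroSummable_of_mem_elemental hunit (isHomogeneousOp_shift e hT hU) hA).2
  exact tendsto_iff_norm_sub_tendsto_zero.mp h
end

section
/- Every A ∈ 𝒯₀ is diagonal with respect to the basis (e_n) (i.e., A e_n = ⟨A e_n, e_n⟩ e_n for all n), the sequence (⟨A e_n, e_n⟩)_n converges, and the map A ↦ (⟨A e_n, e_n⟩)_{n∈ℕ} is an isometric star-algebra isomorphism from 𝒯₀ onto the C*-algebra of convergent complex sequences (i.e., onto C₀(ℕ) + ℂ·1, with supremum norm). -/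
open scoped ComplexInnerProductSpace

section DiagonalOperators

variable {H : Type*} [NormedAddCommGroup H] [InnerProductSpace ℂ H]

theorem HilbertBasis.ext_inner_left (e : HilbertBasis ℕ ℂ H) {x y : H}
    (h : ∀ n, ⟪e n, x⟫ = ⟪e n, y⟫) : x = y := by
  apply e.repr.injective
  ext n
  simpa only [e.repr_apply_apply] using h n

theorem HilbertBasis.inner_eq_ite (e : HilbertBasis ℕ ℂ H) (m n : ℕ) :
    ⟪e m, e n⟫ = if m = n then 1 else 0 :=
  orthonormal_iff_ite.mp e.orthonormal m n

theorem HilbertBasis.norm_eq_one (e : HilbertBasis ℕ ℂ H) (n : ℕ) : ‖e n‖ = 1 :=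
  e.orthonormal.norm_eq_one n

theorem HilbertBasis.hasSum_norm_inner_sq (e : HilbertBasis ℕ ℂ H) (x : H) :
    HasSum (fun n => ‖⟪e n, x⟫‖ ^ 2) (‖x‖ ^ 2) := by
  have h := lp.hasSum_norm (p := 2) (by norm_num) (e.repr x)
  simpa [e.repr_apply_apply] using h

theorem norm_inner_apply_le (e : HilbertBasis ℕ ℂ H) (A : H →L[ℂ] H) (n : ℕ) :
    ‖⟪e n, A (e n)⟫‖ ≤ ‖A‖ := by
  have h1 := norm_inner_le_norm (𝕜 := ℂ) (e n) (A (e n))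
  have h2 := A.le_opNorm (e n)
  rw [e.norm_eq_one] at h1 h2
  linarith

theorem inner_apply_eq_of_apply_eq_smul (e : HilbertBasis ℕ ℂ H) {A : H →L[ℂ] H} {n : ℕ}
    {c : ℂ} (h : A (e n) = c • e n) : ⟪e n, A (e n)⟫ = c := by
  rw [h, inner_smul_right, e.inner_eq_ite, if_pos rfl, mul_one]

theorem shift_pow_apply {e : HilbertBasis ℕ ℂ H} {T : H →L[ℂ] H}
    (hT : ∀ n : ℕ, T (e n) = e (n + 1)) (n m : ℕ) : (T ^ n) (e m) = e (m + n) := by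
  induction n with
  | zero => simp
  | succ k ih => rw [pow_succ', mul_apply_eq_comp, ih, hT, add_assoc]

variable [CompleteSpace H]

theorem adjoint_apply_basis_of_diagonal_s6 (e : HilbertBasis ℕ ℂ H) {A : H →L[ℂ] H} {d : ℕ → ℂ}
    (hA : ∀ n, A (e n) = d n • e n) (n : ℕ) :
    ContinuousLinearMap.adjoint A (e n) = star (d n) • e n := by
  refine e.ext_inner_left fun m => ?_
  rw [ContinuousLinearMap.adjoint_inner_right, hA, inner_smul_left, inner_smul_right,
    e.inner_eq_ite]
  split_ifs with h
  · subst h; rfl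
  · simp

theorem norm_le_of_diagonal (e : HilbertBasis ℕ ℂ H) {A : H →L[ℂ] H} {d : ℕ → ℂ} {C : ℝ}
    (hA : ∀ n, A (e n) = d n • e n) (hd : ∀ n, ‖d n‖ ≤ C) : ‖A‖ ≤ C := by
  have hC : 0 ≤ C := (norm_nonneg _).trans (hd 0)
  refine A.opNorm_le_bound hC fun x => ?_
  refine le_of_sq_le_sq ?_ (by positivity)
  rw [mul_pow]
  refine hasSum_le (fun n => ?_) (e.hasSum_norm_inner_sq (A x))
    ((e.hasSum_norm_inner_sq x).mul_left (C ^ 2))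
  rw [← ContinuousLinearMap.adjoint_inner_left, adjoint_apply_basis_of_diagonal_s6 e hA,
    inner_smul_left, norm_mul, mul_pow]
  have : ‖(starRingEnd ℂ) (star (d n))‖ ≤ C := by simpa using hd n
  gcongr

end DiagonalOperators

section Shift

variable {H : Type*} [NormedAddCommGroup H] [InnerProductSpace ℂ H] [CompleteSpace H]

theorem adjoint_shift_pow_apply {e : HilbertBasis ℕ ℂ H} {T : H →L[ℂ] H}
    (hT : ∀ n : ℕ, T (e n) = e (n + 1)) (n m : ℕ) :
    (ContinuousLinearMap.adjoint T ^ n) (e m) = if n ≤ m then e (m - n) else 0 := by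
  refine e.ext_inner_left fun k => ?_
  rw [← ContinuousLinearMap.star_eq_adjoint, ← star_pow, ContinuousLinearMap.star_eq_adjoint,
    ContinuousLinearMap.adjoint_inner_right, shift_pow_apply hT, e.inner_eq_ite]
  split_ifs with h1 h2 h2
  · rw [e.inner_eq_ite, if_pos (by omega)]
  · omega
  · rw [e.inner_eq_ite, if_neg (by omega)]
  · simp

theorem Tnm_self_apply {e : HilbertBasis ℕ ℂ H} {T : H →L[ℂ] H}
    (hT : ∀ n : ℕ, T (e n) = e (n + 1)) (n m : ℕ) :
    Tnm T n n (e m) = (if n ≤ m then (1 : ℂ) else 0) • e m := by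
  rw [Tnm, mul_apply_eq_comp, adjoint_shift_pow_apply hT]
  split_ifs with h
  · rw [shift_pow_apply hT, Nat.sub_add_cancel h, one_smul]
  · simp

/-- The closed linear span `𝒯₀` of the operators `T_{n,n}`. -/
noncomputable abbrev diagonalToeplitz (T : H →L[ℂ] H) : Submodule ℂ (H →L[ℂ] H) :=
  (Submodule.span ℂ {B : H →L[ℂ] H | ∃ n : ℕ, B = Tnm T n n}).topologicalClosure

theorem apply_basis_of_mem_span {e : HilbertBasis ℕ ℂ H} {T : H →L[ℂ] H}
    (hT : ∀ n : ℕ, T (e n) = e (n + 1)) {A : H →L[ℂ] H}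
    (hA : A ∈ Submodule.span ℂ {B : H →L[ℂ] H | ∃ n : ℕ, B = Tnm T n n}) :
    (∀ n, A (e n) = ⟪e n, A (e n)⟫ • e n) ∧
      ∃ l : ℂ, Filter.Tendsto (fun n : ℕ => ⟪e n, A (e n)⟫) Filter.atTop (nhds l) := by
  induction hA using Submodule.span_induction with
  | mem B hB =>
    obtain ⟨k, rfl⟩ := hB
    have h := fun n => inner_apply_eq_of_apply_eq_smul e (Tnm_self_apply hT k n)
    refine ⟨fun n => by rw [h, Tnm_self_apply hT], 1, ?_⟩
    refine tendsto_const_nhds.congr' ?_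
    filter_upwards [Filter.eventually_ge_atTop k] with n hn
    rw [h, if_pos hn]
  | zero => exact ⟨fun n => by simp, 0, by simp⟩
  | add A B _ _ hA hB =>
    obtain ⟨hA, a, ha⟩ := hA
    obtain ⟨hB, b, hb⟩ := hB
    refine ⟨fun n => ?_, a + b, by simpa [inner_add_right] using ha.add hb⟩
    rw [add_apply, inner_add_right, add_smul, ← hA, ← hB]
  | smul c A _ hA =>
    obtain ⟨hA, a, ha⟩ := hA
    refine ⟨fun n => ?_, c * a, by simpa [inner_smul_right] using ha.const_mul c⟩
    rw [smul_apply, inner_smul_right, mul_smul, ← hA]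

theorem apply_basis_of_mem_closure {e : HilbertBasis ℕ ℂ H} {T : H →L[ℂ] H}
    (hT : ∀ n : ℕ, T (e n) = e (n + 1)) {A : H →L[ℂ] H} (hA : A ∈ diagonalToeplitz T) (n : ℕ) :
    A (e n) = ⟪e n, A (e n)⟫ • e n := by
  have hc : IsClosed {A : H →L[ℂ] H | A (e n) = ⟪e n, A (e n)⟫ • e n} :=
    isClosed_eq (by fun_prop) (by fun_prop)
  exact closure_minimal (fun B hB => (apply_basis_of_mem_span hT hB).1 n) hc hA

theorem exists_tendsto_diagonal_of_mem_closure {e : HilbertBasis ℕ ℂ H} {T : H →L[ℂ] H}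
    (hT : ∀ n : ℕ, T (e n) = e (n + 1)) {A : H →L[ℂ] H} (hA : A ∈ diagonalToeplitz T) :
    ∃ l : ℂ, Filter.Tendsto (fun n : ℕ => ⟪e n, A (e n)⟫) Filter.atTop (nhds l) := by
  refine cauchySeq_tendsto_of_complete (Metric.cauchySeq_iff'.mpr fun ε hε => ?_)
  obtain ⟨B, hB, hAB⟩ := Metric.mem_closure_iff.mp hA (ε / 3) (by positivity)
  obtain ⟨l, hl⟩ := (apply_basis_of_mem_span hT hB).2
  obtain ⟨N, hN⟩ := Metric.cauchySeq_iff'.mp hl.cauchySeq (ε / 3) (by positivity)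
  have hd : ∀ n, dist ⟪e n, A (e n)⟫ ⟪e n, B (e n)⟫ < ε / 3 := fun n => by
    rw [dist_eq_norm] at hAB ⊢
    rw [← inner_sub_right, ← sub_apply]
    exact (norm_inner_apply_le e (A - B) n).trans_lt hAB
  refine ⟨N, fun n hn => ?_⟩
  linarith [hd n, hd N, hN n hn, dist_triangle4 ⟪e n, A (e n)⟫ ⟪e n, B (e n)⟫ ⟪e N, B (e N)⟫
    ⟪e N, A (e N)⟫, dist_comm ⟪e N, A (e N)⟫ ⟪e N, B (e N)⟫]

theorem norm_eq_iSup_of_diagonal (e : HilbertBasis ℕ ℂ H) {A : H →L[ℂ] H}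
    (hA : ∀ n, A (e n) = ⟪e n, A (e n)⟫ • e n) : ‖A‖ = ⨆ n : ℕ, ‖⟪e n, A (e n)⟫‖ := by
  refine le_antisymm (norm_le_of_diagonal e hA fun n => ?_) (ciSup_le (norm_inner_apply_le e A))
  exact le_ciSup (f := fun n => ‖⟪e n, A (e n)⟫‖)
    ⟨‖A‖, Set.forall_mem_range.mpr (norm_inner_apply_le e A)⟩ n

/-- The diagonal operator with entries `x 0, …, x (N - 1), l, l, …`, as a combination of the
operators `T_{n,n}`. -/
noncomputable def truncatedDiagonal (T : H →L[ℂ] H) (x : ℕ → ℂ) (l : ℂ) (N : ℕ) : H →L[ℂ] H :=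
  l • Tnm T 0 0 + ∑ n ∈ Finset.range N, (x n - l) • (Tnm T n n - Tnm T (n + 1) (n + 1))

theorem truncatedDiagonal_mem (T : H →L[ℂ] H) (x : ℕ → ℂ) (l : ℂ) (N : ℕ) :
    truncatedDiagonal T x l N ∈ diagonalToeplitz T := by
  have h : ∀ n, Tnm T n n ∈ diagonalToeplitz T := fun n =>
    Submodule.le_topologicalClosure _ (Submodule.subset_span ⟨n, rfl⟩)
  exact Submodule.add_mem _ (Submodule.smul_mem _ _ (h 0)) (Submodule.sum_mem _ fun n _ =>
    Submodule.smul_mem _ _ (Submodule.sub_mem _ (h n) (h (n + 1))))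

theorem truncatedDiagonal_apply {e : HilbertBasis ℕ ℂ H} {T : H →L[ℂ] H}
    (hT : ∀ n : ℕ, T (e n) = e (n + 1)) (x : ℕ → ℂ) (l : ℂ) (N m : ℕ) :
    truncatedDiagonal T x l N (e m) = (if m < N then x m else l) • e m := by
  induction N with
  | zero => simp [truncatedDiagonal, Tnm_self_apply hT]
  | succ N ih =>
    have hs : truncatedDiagonal T x l (N + 1) = truncatedDiagonal T x l N +
        (x N - l) • (Tnm T N N - Tnm T (N + 1) (N + 1)) := by
      rw [truncatedDiagonal, Finset.sum_range_succ, ← add_assoc, truncatedDiagonal]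
    rw [hs, add_apply, ih, smul_apply, sub_apply,
      Tnm_self_apply hT, Tnm_self_apply hT, ← sub_smul, smul_smul, ← add_smul]
    congr 1
    rcases lt_trichotomy m N with h | rfl | h
    · simp [h, h.trans (Nat.lt_succ_self N), h.not_ge, show ¬ N + 1 ≤ m by omega]
    · simp
    · simp [h.le, h.not_gt, show ¬ m < N + 1 by omega, show N + 1 ≤ m by omega]

theorem cauchySeq_truncatedDiagonal {e : HilbertBasis ℕ ℂ H} {T : H →L[ℂ] H}
    (hT : ∀ n : ℕ, T (e n) = e (n + 1)) {x : ℕ → ℂ} {l : ℂ}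
    (hx : Filter.Tendsto x Filter.atTop (nhds l)) : CauchySeq (truncatedDiagonal T x l) := by
  refine Metric.cauchySeq_iff'.mpr fun ε hε => ?_
  obtain ⟨N, hN⟩ := Metric.tendsto_atTop.mp hx (ε / 2) (by positivity)
  refine ⟨N, fun n hn => ?_⟩
  rw [dist_eq_norm]
  refine (norm_le_of_diagonal e (C := ε / 2)
    (d := fun m => (if m < n then x m else l) - (if m < N then x m else l))
    (fun m => ?_) fun m => ?_).trans_lt (by linarith)
  · rw [sub_apply, truncatedDiagonal_apply hT, truncatedDiagonal_apply hT, sub_smul]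
  · by_cases h1 : m < N
    · simpa [h1, h1.trans_le hn] using (half_pos hε).le
    · by_cases h2 : m < n
      · simpa [h1, h2, dist_eq_norm] using (hN m (not_lt.mp h1)).le
      · simpa [h1, h2] using (half_pos hε).le

theorem exists_mem_closure_diagonal_eq {e : HilbertBasis ℕ ℂ H} {T : H →L[ℂ] H}
    (hT : ∀ n : ℕ, T (e n) = e (n + 1)) {x : ℕ → ℂ} {l : ℂ}
    (hx : Filter.Tendsto x Filter.atTop (nhds l)) :
    ∃ A ∈ diagonalToeplitz T, ∀ n, ⟪e n, A (e n)⟫ = x n := by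
  obtain ⟨A, hA⟩ := cauchySeq_tendsto_of_complete (cauchySeq_truncatedDiagonal hT hx)
  refine ⟨A, (Submodule.isClosed_topologicalClosure _).mem_of_tendsto hA
    (Filter.Eventually.of_forall (truncatedDiagonal_mem T x l)), fun n => ?_⟩
  have hc : Continuous fun B : H →L[ℂ] H => ⟪e n, B (e n)⟫ := by fun_prop
  refine tendsto_nhds_unique ((hc.tendsto A).comp hA) (tendsto_const_nhds.congr' ?_)
  filter_upwards [Filter.eventually_gt_atTop n] with N hN
  rw [Function.comp_apply,
    inner_apply_eq_of_apply_eq_smul e (truncatedDiagonal_apply hT x l N n), if_pos hN]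

end Shift

/-- every `A ∈ 𝒯₀` (the closed span of the `T_{n,n}`) is diagonal w.r.t. `(e_n)`,
its diagonal `(⟨A e_n, e_n⟩)_n` is a convergent sequence, and `A ↦ (⟨A e_n, e_n⟩)_n` is an
isometric star-algebra isomorphism of `𝒯₀` onto the C*-algebra of convergent sequences. -/
theorem T0_iso_convergent_sequences {H : Type*} [NormedAddCommGroup H]
    [InnerProductSpace ℂ H] [CompleteSpace H] (e : HilbertBasis ℕ ℂ H) (T : H →L[ℂ] H)
    (hT : ∀ n : ℕ, T (e n) = e (n + 1)) :
    (∀ A ∈ (Submodule.span ℂ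
        {B : H →L[ℂ] H | ∃ n : ℕ, B = Tnm T n n}).topologicalClosure,
      -- `A` is diagonal
      (∀ n : ℕ, A (e n) = ⟪e n, A (e n)⟫ • e n) ∧
      -- the diagonal sequence converges
      (∃ l : ℂ, Filter.Tendsto (fun n : ℕ => ⟪e n, A (e n)⟫) Filter.atTop (nhds l)) ∧
      -- the map `A ↦ diagonal` is isometric
      ‖A‖ = ⨆ n : ℕ, ‖(⟪e n, A (e n)⟫ : ℂ)‖) ∧
    -- the map is a star-algebra homomorphism (it is linear since `⟪e n, ·⟫` is linear)
    (∀ A ∈ (Submodule.span ℂ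
        {B : H →L[ℂ] H | ∃ n : ℕ, B = Tnm T n n}).topologicalClosure,
      ∀ B ∈ (Submodule.span ℂ
        {B : H →L[ℂ] H | ∃ n : ℕ, B = Tnm T n n}).topologicalClosure,
      (∀ n : ℕ, ⟪e n, (A * B) (e n)⟫ = ⟪e n, A (e n)⟫ * ⟪e n, B (e n)⟫) ∧
      (∀ n : ℕ, ⟪e n, (star A) (e n)⟫ = star ⟪e n, A (e n)⟫)) ∧
    -- the map is onto the algebra of convergent sequences
    (∀ x : ℕ → ℂ, (∃ l : ℂ, Filter.Tendsto x Filter.atTop (nhds l)) →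
      ∃ A ∈ (Submodule.span ℂ
        {B : H →L[ℂ] H | ∃ n : ℕ, B = Tnm T n n}).topologicalClosure,
        ∀ n : ℕ, ⟪e n, A (e n)⟫ = x n) := by
  refine ⟨fun A hA => ?_, fun A hA B hB => ⟨fun n => ?_, fun n => ?_⟩,
    fun x ⟨l, hl⟩ => exists_mem_closure_diagonal_eq hT hl⟩
  · have hd := apply_basis_of_mem_closure hT hA
    exact ⟨hd, exists_tendsto_diagonal_of_mem_closure hT hA, norm_eq_iSup_of_diagonal e hd⟩
  · rw [mul_apply_eq_comp, apply_basis_of_mem_closure hT hB n, map_smul,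
      inner_smul_right, inner_smul_right, e.inner_eq_ite, if_pos rfl, mul_one, mul_comm]
  · rw [ContinuousLinearMap.star_eq_adjoint, ContinuousLinearMap.adjoint_inner_right]
    exact (inner_conj_symm _ _).symm
end

section
/- Let h be a state on 𝒯. Then the following are equivalent: (i) for every continuous linear functional ρ on 𝒯 there exists λ_ρ ∈ ℂ such that h(T_{n,m})·ρ(T_{n,m}) = λ_ρ·h(T_{n,m}) for all n, m ∈ ℕ; (ii) h(T_{0,0}) = 1 and h(T_{n,m}) = 0 whenever n ≠ 0 or m ≠ 0. Moreover, the unique state satisfying (ii) is h(A) = ⟨A e_0, e_0⟩. -/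
open scoped ComplexInnerProductSpace
open ComplexOrder

section Isometry

variable {H : Type*} [NormedAddCommGroup H] [InnerProductSpace ℂ H] [CompleteSpace H]
  {T : H →L[ℂ] H}

lemma Tnm_mem_ToeplitzAlg (T : H →L[ℂ] H) (n m : ℕ) : Tnm T n m ∈ ToeplitzAlg T := by
  have hT : T ∈ ToeplitzAlg T := StarAlgebra.elemental.self_mem ℂ T
  exact mul_mem (pow_mem hT n) (pow_mem (star_mem hT) m)

lemma exists_eq_Tnm_of_mem_closure (hiso : ContinuousLinearMap.adjoint T * T = 1)
    {w : H →L[ℂ] H} (hw : w ∈ Submonoid.closure ({T} ∪ star {T} : Set (H →L[ℂ] H))) :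
    ∃ n m, w = Tnm T n m := by
  induction hw using Submonoid.closure_induction_left with
  | one => exact ⟨0, 0, by simp [Tnm]⟩
  | mul_left x hx y _ ih =>
    obtain ⟨n, m, rfl⟩ := ih
    rcases hx with rfl | hx
    · exact ⟨n + 1, m, by rw [Tnm, Tnm, pow_succ', mul_assoc]⟩
    · obtain rfl : x = ContinuousLinearMap.adjoint T := by
        rw [Set.star_singleton] at hx
        exact hx
      cases n with
      | zero => exact ⟨0, m + 1, by simp [Tnm, pow_succ']⟩
      | succ n =>
        refine ⟨n, m, ?_⟩
        rw [Tnm, Tnm, pow_succ', mul_assoc, ← mul_assoc, hiso, one_mul]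

/-- The operators `T_{n,m}` span a dense subspace of the Toeplitz algebra of an isometry. -/
lemma ToeplitzAlg_functional_ext (hiso : ContinuousLinearMap.adjoint T * T = 1)
    {f g : ToeplitzAlg T →L[ℂ] ℂ}
    (hfg : ∀ n m, f ⟨Tnm T n m, Tnm_mem_ToeplitzAlg T n m⟩ =
      g ⟨Tnm T n m, Tnm_mem_ToeplitzAlg T n m⟩) : f = g := by
  let S : Submodule ℂ (H →L[ℂ] H) :=
    (LinearMap.ker (f - g).toLinearMap).map (ToeplitzAlg T).subtype.toLinearMap
  have hclosed : IsClosed (S : Set (H →L[ℂ] H)) :=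
    (StarAlgebra.elemental.isClosed ℂ T).isClosedMap_subtype_val _ (f - g).isClosed_ker
  have hadjoin : (StarAlgebra.adjoin ℂ {T} : Set (H →L[ℂ] H)) ⊆ S := by
    intro A hA
    rw [SetLike.mem_coe, ← StarSubalgebra.mem_toSubalgebra, StarAlgebra.adjoin_toSubalgebra,
      ← Subalgebra.mem_toSubmodule, Algebra.adjoin_eq_span] at hA
    refine Submodule.span_le.2 (fun w hw => ?_) hA
    obtain ⟨n, m, rfl⟩ := exists_eq_Tnm_of_mem_closure hiso hw
    exact ⟨⟨Tnm T n m, Tnm_mem_ToeplitzAlg T n m⟩, by simp [hfg], rfl⟩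
  ext A
  obtain ⟨B, hB, hBA⟩ := closure_minimal hadjoin hclosed A.2
  obtain rfl : B = A := Subtype.ext hBA
  simpa [sub_eq_zero] using hB

end Isometry

lemma HilbertBasis.eq_of_inner_eq {H : Type*} [NormedAddCommGroup H] [InnerProductSpace ℂ H]
    (e : HilbertBasis ℕ ℂ H) {x y : H} (hxy : ∀ k, ⟪e k, x⟫ = ⟪e k, y⟫) :
    x = y := by
  apply e.repr.injective
  ext k
  rw [e.repr_apply_apply, e.repr_apply_apply, hxy]

section Shift

variable {H : Type*} [NormedAddCommGroup H] [InnerProductSpace ℂ H] [CompleteSpace H]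
  (e : HilbertBasis ℕ ℂ H) {T : H →L[ℂ] H}

lemma adjoint_shift_zero (hT : ∀ n : ℕ, T (e n) = e (n + 1)) :
    ContinuousLinearMap.adjoint T (e 0) = 0 := by
  refine e.eq_of_inner_eq fun k => ?_
  rw [ContinuousLinearMap.adjoint_inner_right, hT, inner_zero_right]
  exact e.orthonormal.2 (Nat.succ_ne_zero k)

lemma adjoint_shift_mul_shift (hT : ∀ n : ℕ, T (e n) = e (n + 1)) :
    ContinuousLinearMap.adjoint T * T = 1 := by
  refine ContinuousLinearMap.ext_on
    (Submodule.dense_iff_topologicalClosure_eq_top.2 e.dense_span) ?_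
  rintro _ ⟨n, rfl⟩
  refine e.eq_of_inner_eq fun k => ?_
  simp [ContinuousLinearMap.adjoint_inner_right, hT,
    orthonormal_iff_ite.1 e.orthonormal]

/-- The vacuum expectation `A ↦ ⟨A e₀, e₀⟩` on the Toeplitz algebra. -/
noncomputable def vacuumFunctional (T : H →L[ℂ] H) : ToeplitzAlg T →L[ℂ] ℂ where
  toFun A := ⟪e 0, (A : H →L[ℂ] H) (e 0)⟫
  map_add' A B := by simp
  map_smul' c A := by simp
  cont := by fun_prop

lemma vacuumFunctional_Tnm (hT : ∀ n : ℕ, T (e n) = e (n + 1)) {n m : ℕ}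
    (hnm : Tnm T n m ∈ ToeplitzAlg T) (h : n ≠ 0 ∨ m ≠ 0) :
    vacuumFunctional e T ⟨Tnm T n m, hnm⟩ = 0 := by
  change ⟪e 0, (T ^ n * (ContinuousLinearMap.adjoint T) ^ m) (e 0)⟫ = 0
  have h0 := adjoint_shift_zero e hT
  cases m with
  | succ m => simp [pow_succ, h0]
  | zero =>
    obtain ⟨k, rfl⟩ := Nat.exists_eq_succ_of_ne_zero (h.resolve_right (not_not.2 rfl))
    simp [pow_succ', ← ContinuousLinearMap.adjoint_inner_left, h0]

end Shift

/-- characterization of the Haar functional on `𝒯`: for a state `h` on `𝒯`,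
the Haar-type invariance property (i) is equivalent to (ii) `h(T_{0,0}) = 1` and
`h(T_{n,m}) = 0` for `(n,m) ≠ (0,0)`; moreover any state satisfying (ii) is
`h(A) = ⟨A e₀, e₀⟩`. -/
theorem haar_functional_characterization {H : Type*} [NormedAddCommGroup H]
    [InnerProductSpace ℂ H] [CompleteSpace H] (e : HilbertBasis ℕ ℂ H) (T : H →L[ℂ] H)
    (hT : ∀ n : ℕ, T (e n) = e (n + 1))
    (h : (ToeplitzAlg T) →L[ℂ] ℂ)
    (hpos : ∀ a : ToeplitzAlg T, 0 ≤ h (star a * a)) (hone : h 1 = 1) :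
    ((∀ ρ : (ToeplitzAlg T) →L[ℂ] ℂ, ∃ lam : ℂ,
        ∀ (n m : ℕ) (hnm : Tnm T n m ∈ ToeplitzAlg T),
          h ⟨Tnm T n m, hnm⟩ * ρ ⟨Tnm T n m, hnm⟩ = lam * h ⟨Tnm T n m, hnm⟩) ↔
      ((∀ h00 : Tnm T 0 0 ∈ ToeplitzAlg T, h ⟨Tnm T 0 0, h00⟩ = 1) ∧
        (∀ (n m : ℕ) (hnm : Tnm T n m ∈ ToeplitzAlg T), (n ≠ 0 ∨ m ≠ 0) →
          h ⟨Tnm T n m, hnm⟩ = 0))) ∧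
    (((∀ h00 : Tnm T 0 0 ∈ ToeplitzAlg T, h ⟨Tnm T 0 0, h00⟩ = 1) ∧
        (∀ (n m : ℕ) (hnm : Tnm T n m ∈ ToeplitzAlg T), (n ≠ 0 ∨ m ≠ 0) →
          h ⟨Tnm T n m, hnm⟩ = 0)) →
      ∀ A : ToeplitzAlg T, h A = ⟪e 0, (A : H →L[ℂ] H) (e 0)⟫) := by
  have Tnm_zero (h00 : Tnm T 0 0 ∈ ToeplitzAlg T) :
      (⟨Tnm T 0 0, h00⟩ : ToeplitzAlg T) = 1 := Subtype.ext (by simp [Tnm])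
  have hvac : vacuumFunctional e T 1 = 1 := by
    change ⟪e 0, e 0⟫ = 1
    simp [e.orthonormal.1 0]
  refine ⟨⟨fun hinv => ⟨fun h00 => by rw [Tnm_zero, hone], fun n m hnm hne => ?_⟩,
    fun hh ρ => ⟨ρ 1, fun n m hnm => ?_⟩⟩, fun hh A => ?_⟩
  · obtain ⟨lam, hlam⟩ := hinv (vacuumFunctional e T)
    have hlam_one := hlam 0 0 (Tnm_mem_ToeplitzAlg T 0 0)
    rw [Tnm_zero, hone, hvac, one_mul, mul_one] at hlam_one
    simpa [← hlam_one, vacuumFunctional_Tnm e hT hnm hne] using (hlam n m hnm).symm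
  · by_cases hne : n ≠ 0 ∨ m ≠ 0
    · simp [hh.2 n m hnm hne]
    · obtain ⟨rfl, rfl⟩ : n = 0 ∧ m = 0 := by simpa using hne
      rw [Tnm_zero, mul_comm]
  · suffices h = vacuumFunctional e T from DFunLike.congr_fun this A
    refine ToeplitzAlg_functional_ext (adjoint_shift_mul_shift e hT) fun n m => ?_
    by_cases hne : n ≠ 0 ∨ m ≠ 0
    · rw [hh.2 n m _ hne, vacuumFunctional_Tnm e hT _ hne]
    · obtain ⟨rfl, rfl⟩ : n = 0 ∧ m = 0 := by simpa using hne
      rw [Tnm_zero, hone, hvac]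
end
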